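/- For every integer n ≥ 2, the simplex Q_n is unimodularly equivalent to its dual polytope Q_n^∨; that is, Q_n is self dual. -/

import Mathlib

open Finset

/-- The vertex `C_j` of the simplex `Q_n ⊂ ℝ^{n-1}`: coordinate `i` (0-based; the
1-based coordinate is `i+1`) equals `1` if `i+1 < n-j`, equals `-(n-j)` if `i+1 = n-j`,
and equals `0` if `i+1 > n-j`.  For `j = 0` this is the all-ones vector. -/
noncomputable def Cvert (n j : ℕ) : Fin (n - 1) → ℝ := fun i =>
  if (i : ℕ) + 1 < n - j then 1
  else if (i : ℕ) + 1 = n - j then -((n : ℝ) - (j : ℝ))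
  else 0

/-- The simplex `Q_n = conv{C_0, C_1, …, C_{n-1}} ⊂ ℝ^{n-1}`. -/
noncomputable def Qpoly (n : ℕ) : Set (Fin (n - 1) → ℝ) :=
  convexHull ℝ {x | ∃ j ≤ n - 1, x = Cvert n j}

/-- The dual polytope `P^∨ = {y ∈ ℝ^d : ⟨x, y⟩ ≤ 1 for all x ∈ P}`. -/
def dualPoly {d : ℕ} (P : Set (Fin d → ℝ)) : Set (Fin d → ℝ) :=
  {y | ∀ x ∈ P, ∑ i, x i * y i ≤ 1}

/-- Two polytopes `P₁, P₂ ⊂ ℝ^d` are *unimodularly equivalent* if there are a matrix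
`U ∈ ℤ^{d×d}` with `det U = ±1` and a vector `v ∈ ℤ^d` with
`P₂ = {xU + v : x ∈ P₁}` (row vector times matrix: `(xU)_j = ∑ i, x_i U_{ij}`). -/
def UnimodEquiv {d : ℕ} (P₁ P₂ : Set (Fin d → ℝ)) : Prop :=
  ∃ (U : Matrix (Fin d) (Fin d) ℤ) (v : Fin d → ℤ),
    (U.det = 1 ∨ U.det = -1) ∧
    P₂ = (fun x : Fin d → ℝ => fun jc => (∑ i, x i * (U i jc : ℝ)) + (v jc : ℝ)) '' P₁

/-!
The vertices of `Q_n` are `n` vectors in dimension `n - 1` with pairwise inner products `-1`: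
for `j < k` the support of `C_k` lies where `C_j` is constantly `1`, so `⟨C_j, C_k⟩` is the
coordinate sum of `C_k`. For any such family `p`, the affine function `x ↦ 1 + ⟨p k, x⟩` vanishes
at every vertex but `p k`, where it is positive, so it is a positive multiple of the `k`-th
barycentric coordinate. Hence the simplex is cut out by the inequalities `⟨p k, x⟩ ≥ -1`, which say
that `-x` lies in its dual: the dual is the reflection of the simplex through the origin.
-/

section BarycentricCoordinates

variable {𝕜 V P ι : Type*}

theorem affineIndependent_of_dual_affineMap [Ring 𝕜] [NoZeroDivisors 𝕜] [AddCommGroup V]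
    [Module 𝕜 V] [AddTorsor V P] {p : ι → P} (g : ι → P →ᵃ[𝕜] 𝕜) (h_self : ∀ i, g i (p i) ≠ 0)
    (h_ne : Pairwise fun i j => g i (p j) = 0) : AffineIndependent 𝕜 p := by
  refine .of_comp (AffineMap.pi g) (affineIndependent_iff.2 fun s w _ hsum i hi => ?_)
  have hi_sum : ∑ j ∈ s, w j * g i (p j) = 0 := by
    simpa using congrFun hsum i
  rw [sum_eq_single_of_mem i hi fun j _ hji => by rw [h_ne hji.symm, mul_zero]] at hi_sum
  exact (mul_eq_zero.1 hi_sum).resolve_right (h_self i)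

theorem affineMap_eq_smul_coord [CommRing 𝕜] [AddCommGroup V] [Module 𝕜 V] [AddTorsor V P]
    (b : AffineBasis ι 𝕜 P) {i : ι} {g : P →ᵃ[𝕜] 𝕜} (h_ne : ∀ j, i ≠ j → g (b j) = 0) :
    g = g (b i) • b.coord i := by
  refine AffineMap.ext_on b.tot ?_
  rintro _ ⟨j, rfl⟩
  obtain rfl | hij := eq_or_ne i j
  · simp
  · simp [h_ne j hij, b.coord_apply_ne hij]

theorem convexHull_range_eq_setOf_forall_affineMap_nonneg [Field 𝕜] [LinearOrder 𝕜]
    [IsStrictOrderedRing 𝕜] [AddCommGroup V] [Module 𝕜 V] [FiniteDimensional 𝕜 V] [Fintype ι]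
    {p : ι → V} (g : ι → V →ᵃ[𝕜] 𝕜) (hcard : Fintype.card ι = Module.finrank 𝕜 V + 1)
    (h_self : ∀ i, 0 < g i (p i)) (h_ne : Pairwise fun i j => g i (p j) = 0) :
    convexHull 𝕜 (Set.range p) = {x | ∀ i, 0 ≤ g i x} := by
  have hp : AffineIndependent 𝕜 p :=
    affineIndependent_of_dual_affineMap g (fun i => (h_self i).ne') h_ne
  let b : AffineBasis ι 𝕜 V :=
    ⟨p, hp, hp.affineSpan_eq_top_iff_card_eq_finrank_add_one.2 hcard⟩
  have hg (i : ι) (x : V) : g i x = g i (p i) * b.coord i x :=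
    DFunLike.congr_fun (affineMap_eq_smul_coord b fun j hij => h_ne hij) x
  have hconv : convexHull 𝕜 (Set.range p) = {x | ∀ i, 0 ≤ b.coord i x} :=
    b.convexHull_eq_nonneg_coord
  rw [hconv]
  ext x
  exact forall_congr' fun i => by rw [hg, mul_nonneg_iff_of_pos_left (h_self i)]

end BarycentricCoordinates

theorem convexHull_range_eq_setOf_forall_neg_one_le_dotProduct {𝕜 ι κ : Type*} [Field 𝕜]
    [LinearOrder 𝕜] [IsStrictOrderedRing 𝕜] [Fintype ι] [Fintype κ] {p : κ → ι → 𝕜}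
    (hcard : Fintype.card κ = Fintype.card ι + 1)
    (hp : Pairwise fun j k => p j ⬝ᵥ p k = -1) :
    convexHull 𝕜 (Set.range p) = {x | ∀ k, -1 ≤ p k ⬝ᵥ x} := by
  let g (k : κ) : (ι → 𝕜) →ᵃ[𝕜] 𝕜 :=
    (dotProductBilin 𝕜 𝕜 (p k)).toAffineMap + AffineMap.const 𝕜 _ 1
  have hg (k : κ) (x : ι → 𝕜) : g k x = p k ⬝ᵥ x + 1 := rfl
  rw [convexHull_range_eq_setOf_forall_affineMap_nonneg g]
  · simp only [hg, neg_le_iff_add_nonneg]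
  · rw [hcard, Module.finrank_pi]
  · intro k
    have : 0 ≤ p k ⬝ᵥ p k := sum_nonneg fun i _ => mul_self_nonneg (p k i)
    rw [hg]
    positivity
  · intro j k hjk
    simp [hg, hp hjk]

section DualPoly

variable {d : ℕ}

theorem dualPoly_convexHull (s : Set (Fin d → ℝ)) : dualPoly (convexHull ℝ s) = dualPoly s := by
  ext y
  have hconvex : Convex ℝ {x | dotProductBilin ℝ ℝ y x ≤ 1} :=
    convex_halfSpace_le (dotProductBilin ℝ ℝ y).isLinear 1
  simpa [Set.subset_def, dualPoly, dotProduct, mul_comm] using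
    hconvex.convexHull_subset_iff (s := s)

theorem dualPoly_convexHull_range_eq_neg {κ : Type*} [Fintype κ] {p : κ → Fin d → ℝ}
    (hcard : Fintype.card κ = d + 1) (hp : Pairwise fun j k => p j ⬝ᵥ p k = -1) :
    dualPoly (convexHull ℝ (Set.range p)) = -convexHull ℝ (Set.range p) := by
  ext y
  calc y ∈ dualPoly (convexHull ℝ (Set.range p))
    _ ↔ ∀ k, p k ⬝ᵥ y ≤ 1 := by rw [dualPoly_convexHull]; exact Set.forall_mem_range
    _ ↔ ∀ k, -1 ≤ p k ⬝ᵥ -y := by simp only [dotProduct_neg, neg_le_neg_iff]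
    _ ↔ y ∈ -convexHull ℝ (Set.range p) := by
      rw [convexHull_range_eq_setOf_forall_neg_one_le_dotProduct (by simpa using hcard) hp]; rfl

theorem unimodEquiv_neg (P : Set (Fin d → ℝ)) : UnimodEquiv P (-P) := by
  refine ⟨-1, 0, ?_, ?_⟩
  · simpa [Matrix.det_neg] using neg_one_pow_eq_or ℤ d
  · rw [← Set.image_neg_eq_neg]
    congr 1
    ext x j
    simp [Matrix.one_apply]

end DualPoly

section Qpoly

variable {n : ℕ}

theorem sum_Cvert {k : ℕ} (hk₀ : 0 < k) (hkn : k < n) : ∑ i, Cvert n k i = -1 := by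
  let q : Fin (n - 1) := ⟨n - k - 1, by omega⟩
  have hq : ((q : ℕ) : ℝ) = n - k - 1 := by
    rw [Nat.cast_sub (by omega), Nat.cast_sub hkn.le, Nat.cast_one]
  have hC (i : Fin (n - 1)) :
      Cvert n k i = (if i < q then 1 else 0) + if i = q then -((n : ℝ) - k) else 0 := by
    have hlt : i < q ↔ (i : ℕ) + 1 < n - k := by rw [Fin.lt_def]; grind
    have heq : i = q ↔ (i : ℕ) + 1 = n - k := by rw [Fin.ext_iff]; grind
    grind [Cvert]
  calc ∑ i, Cvert n k i
    _ = (q : ℝ) + -((n : ℝ) - k) := by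
      simp only [hC, sum_add_distrib, sum_boole, sum_ite_eq', mem_univ, if_true,
        filter_gt_eq_Iio, Fin.card_Iio]
    _ = -1 := by rw [hq]; ring

theorem Cvert_mul_Cvert_of_lt {j k : ℕ} (hjk : j < k) (i : Fin (n - 1)) :
    Cvert n j i * Cvert n k i = Cvert n k i := by
  unfold Cvert
  grind

theorem Cvert_dotProduct_Cvert {j k : ℕ} (hj : j < n) (hk : k < n) (hjk : j ≠ k) :
    Cvert n j ⬝ᵥ Cvert n k = -1 := by
  wlog hlt : j < k generalizing j k
  · rw [dotProduct_comm, this hk hj hjk.symm (by omega)]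
  · simp only [dotProduct, Cvert_mul_Cvert_of_lt hlt, sum_Cvert (Nat.zero_lt_of_lt hlt) hk]

theorem Qpoly_eq_convexHull_range (hn : 0 < n) :
    Qpoly n = convexHull ℝ (Set.range fun j : Fin n => Cvert n j) := by
  unfold Qpoly
  congr 1
  ext x
  simp only [Nat.le_sub_one_iff_lt hn, Set.mem_ofPred_eq, Set.mem_range,
    Fin.exists_iff, exists_prop, eq_comm]

theorem dualPoly_Qpoly (hn : 0 < n) : dualPoly (Qpoly n) = -Qpoly n := by
  rw [Qpoly_eq_convexHull_range hn]
  refine dualPoly_convexHull_range_eq_neg ?_ fun j k hjk => ?_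
  · rw [Fintype.card_fin, Nat.sub_add_cancel hn]
  · exact Cvert_dotProduct_Cvert j.2 k.2 (Fin.val_ne_of_ne hjk)

end Qpoly

/-- For every integer `n ≥ 2`, the simplex `Q_n` is unimodularly
equivalent to its dual polytope `Q_n^∨`; that is, `Q_n` is self dual. -/
theorem stmt_5 (n : ℕ) (hn : 2 ≤ n) :
    UnimodEquiv (Qpoly n) (dualPoly (Qpoly n)) := by
  rw [dualPoly_Qpoly (by omega)]
  exact unimodEquiv_neg (Qpoly n)
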